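/- arXiv:1310.5651 — 5 statements merged into one kernel-verified Lean document; each statement's English description precedes it below -/
import Mathlib

section
/- The characteristic polynomial P(λ) = det(λI − J) of the matrix J has only real coefficients. -/
/-!
Complex conjugation (time reversal) sends `A + iB`, with `A` and `B` real, to `A - iB`. If a
permutation of the indices (parity) fixes `A` and negates `B`, relabelling by it has the same
effect, and the characteristic polynomial is invariant under relabelling. It is therefore invariant
under conjugation. In the theorem `A` is the adjacency matrix of a path, `B` is diagonal, and the
permutation is the reflection of the path.
-/

open Matrix SimpleGraph

section Charpoly

variable {ι : Type*} [Fintype ι] [DecidableEq ι]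

theorem charpoly_map_eq_self_of_map_eq_submatrix {R : Type*} [CommRing R] {f : R →+* R}
    {M : Matrix ι ι R} {σ : Equiv.Perm ι} (h : M.map f = M.submatrix σ σ) :
    M.charpoly.map f = M.charpoly := by
  rw [← charpoly_map, h]
  exact charpoly_reindex σ.symm M

theorem map_conj_add_I_smul {m n : Type*} (A B : Matrix m n ℝ) :
    (A.map Complex.ofReal + Complex.I • B.map Complex.ofReal).map (starRingEnd ℂ) =
      A.map Complex.ofReal + Complex.I • (-B).map Complex.ofReal := by
  ext i j
  simp

theorem stmt_0_general {A B : Matrix ι ι ℝ} {σ : Equiv.Perm ι} (hA : A.submatrix σ σ = A)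
    (hB : B.submatrix σ σ = -B) (n : ℕ) :
    ((A.map Complex.ofReal + Complex.I • B.map Complex.ofReal).charpoly.coeff n).im = 0 := by
  set M := A.map Complex.ofReal + Complex.I • B.map Complex.ofReal
  have hM : M.map (starRingEnd ℂ) = M.submatrix σ σ := calc
    M.map (starRingEnd ℂ) = A.map Complex.ofReal + Complex.I • (-B).map Complex.ofReal :=
      map_conj_add_I_smul A B
    _ = (A.submatrix σ σ).map Complex.ofReal +
        Complex.I • (B.submatrix σ σ).map Complex.ofReal := by rw [hA, hB]
    _ = M.submatrix σ σ := rfl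
  rw [← Complex.conj_eq_iff_im, ← Polynomial.coeff_map,
    charpoly_map_eq_self_of_map_eq_submatrix hM]

end Charpoly

theorem submatrix_diagonal_eq_neg {ι R : Type*} [DecidableEq ι] [NegZeroClass R] {d : ι → R}
    {σ : Equiv.Perm ι} (hd : ∀ i, d (σ i) = -d i) :
    (diagonal d).submatrix σ σ = -diagonal d := by
  rw [submatrix_diagonal_equiv, diagonal_neg]
  exact congrArg diagonal (funext hd)

theorem mk_sub_one_sub_eq_rev {n : ℕ} (k : Fin n) (h : n - 1 - (k : ℕ) < n) :
    (⟨n - 1 - (k : ℕ), h⟩ : Fin n) = k.rev :=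
  Fin.ext (by simp only [Fin.val_rev]; omega)

/-- The reflection of the path graph on `n` vertices, exchanging its two ends: the parity operator
of the chain. -/
def pathGraphRevIso (n : ℕ) : pathGraph n ≃g pathGraph n where
  toEquiv := Fin.revPerm
  map_rel_iff' {k m} := by
    simp only [pathGraph_adj, Fin.revPerm_apply, Fin.val_rev]
    omega

theorem eq_adjMatrix_pathGraph_add_I_smul_diagonal {n : ℕ} [DecidableRel (pathGraph n).Adj]
    {γ : Fin n → ℝ} {J : Matrix (Fin n) (Fin n) ℂ}
    (hJ : ∀ k m : Fin n, J k m =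
      if (k : ℕ) + 1 = (m : ℕ) then 1
      else if (m : ℕ) + 1 = (k : ℕ) then 1
      else if k = m then Complex.I * (γ k : ℂ) else 0) :
    J = ((pathGraph n).adjMatrix ℝ).map Complex.ofReal +
      Complex.I • (diagonal γ).map Complex.ofReal := by
  ext k m
  rcases eq_or_ne k m with rfl | hkm
  · simp [hJ]
  · simp [hJ, adjMatrix_apply, pathGraph_adj, hkm, ← ite_or, apply_ite Complex.ofReal]

/-- The characteristic polynomial `P(λ) = det(λI − J)` of the matrix `J`
has only real coefficients. Here `J` is the `2N × 2N` complex matrix (indexed `0`-based)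
with `J_{k,k+1} = J_{k+1,k} = 1`, `J_{k,k} = i γ_k`, and all other entries zero,
where the real numbers `γ` satisfy the PT-antisymmetry condition. -/
theorem stmt_0 (N : ℕ) (hN : 1 ≤ N) (γ : Fin (2 * N) → ℝ)
    (hγ : ∀ k : Fin (2 * N), γ k = - γ ⟨2 * N - 1 - (k : ℕ), by have := k.isLt; omega⟩)
    (J : Matrix (Fin (2 * N)) (Fin (2 * N)) ℂ)
    (hJ : ∀ k m : Fin (2 * N), J k m =
      if (k : ℕ) + 1 = (m : ℕ) then 1
      else if (m : ℕ) + 1 = (k : ℕ) then 1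
      else if k = m then Complex.I * (γ k : ℂ) else 0) :
    ∀ n : ℕ, (J.charpoly.coeff n).im = 0 := by
  classical
  have hγ_odd (k : Fin (2 * N)) : γ k.rev = -γ k := by rw [hγ k, neg_neg, mk_sub_one_sub_eq_rev]
  rw [eq_adjMatrix_pathGraph_add_I_smul_diagonal hJ]
  exact stmt_0_general ((pathGraphRevIso (2 * N)).toEmbedding.submatrix_adjMatrix ℝ)
    (submatrix_diagonal_eq_neg (σ := Fin.revPerm) hγ_odd)
end

section
/- Let Z be the 2N×2N complex matrix with entries Z_{k,j} = (−1)^{j−1} if j = 2N+1−k and Z_{k,j} = 0 otherwise. Then Z·Z = −I (so Z is invertible with Z^{−1} = −Z), and Z^{−1}·J·Z = −J. Consequently, the characteristic polynomial P of J is an even function: P(−λ) = P(λ) for all λ ∈ ℂ, i.e., all coefficients of odd powers of λ in P vanish. -/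
/-!
The matrix `Z` is the order reversal of the sites followed by alternating signs, so conjugation by
`Z` sends the entry `J k m` to `± J k.rev m.rev`. Reversal fixes the couplings and negates the
diagonal, whereas the alternating signs negate the couplings and fix the diagonal; hence `J` is
similar to `-J`. Comparing `charpoly (-J) = charpoly J` with `charpoly (-J) = (-1) ^ n * P(-X)`
gives the parity of `P = charpoly J`.
-/

open Matrix Polynomial

section Charpoly

variable {ι R : Type*} [Fintype ι] [DecidableEq ι] [CommRing R]

lemma charpoly_neg (A : Matrix ι ι R) :
    (-A).charpoly = (-1) ^ Fintype.card ι * A.charpoly.comp (-X) := by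
  have hcharmatrix : charmatrix (-A) = -(compRingHom (-X)).mapMatrix (charmatrix A) := by
    ext1 i j
    by_cases hij : i = j
    · subst hij
      simp [charmatrix_apply_eq, add_comm]
    · simp [charmatrix_apply_ne _ _ _ hij]
  rw [charpoly, hcharmatrix, det_neg, ← RingHom.map_det, coe_compRingHom_apply, ← charpoly]

lemma charpoly_comp_neg_X_of_conj_eq_neg {A Z : Matrix ι ι R} (hZ : IsUnit Z.det)
    (hconj : Z⁻¹ * A * Z = -A) :
    A.charpoly.comp (-X) = (-1) ^ Fintype.card ι * A.charpoly := by
  have hneg : (-A).charpoly = A.charpoly := by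
    rw [← hconj, charpoly_mul_comm, ← mul_assoc, mul_nonsing_inv _ hZ, one_mul]
  rw [charpoly_neg] at hneg
  nth_rw 2 [← hneg]
  rw [← mul_assoc, ← mul_pow, neg_one_mul, neg_neg, one_pow, one_mul]

lemma coeff_eq_zero_of_comp_neg_X_eq [IsAddTorsionFree R] {p : R[X]} {n k : ℕ}
    (hp : p.comp (-X) = (-1) ^ n * p) (hnk : Odd (n + k)) : p.coeff k = 0 := by
  have hcoeff : p.coeff k * (-1) ^ k = (-1) ^ n * p.coeff k := by
    have h := congrArg (coeff · k) hp
    rwa [show (-X : R[X]) = C (-1) * X by simp, show ((-1) ^ n : R[X]) = C ((-1) ^ n) by simp,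
      comp_C_mul_X_coeff, coeff_C_mul] at h
  have hsq : (-1 : R) ^ k * (-1) ^ k = 1 := by rw [← mul_pow, neg_one_mul, neg_neg, one_pow]
  have hodd : (-1 : R) ^ n * (-1) ^ k = -1 := by rw [← pow_add, hnk.neg_one_pow]
  refine self_eq_neg.mp ?_
  linear_combination (-1) ^ k * hcoeff - p.coeff k * hsq + p.coeff k * hodd

end Charpoly

section SignedReversal

variable {R : Type*} [CommRing R] {n : ℕ}

variable (R n) in
/-- The reversal permutation matrix with the sign `(-1) ^ j` on its `j`-th column; the matrix `Z` of
the theorem is `signedReversal ℂ (2 * N)`. -/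
def signedReversal : Matrix (Fin n) (Fin n) R :=
  of fun i j => if j = i.rev then (-1) ^ (j : ℕ) else 0

lemma signedReversal_apply (i j : Fin n) :
    signedReversal R n i j = if j = i.rev then (-1) ^ (j : ℕ) else 0 :=
  rfl

lemma signedReversal_mul_apply (A : Matrix (Fin n) (Fin n) R) (i j : Fin n) :
    (signedReversal R n * A) i j = (-1) ^ (i.rev : ℕ) * A i.rev j := by
  simp [mul_apply, signedReversal_apply]

lemma mul_signedReversal_apply (A : Matrix (Fin n) (Fin n) R) (i j : Fin n) :
    (A * signedReversal R n) i j = A i j.rev * (-1) ^ (j : ℕ) := by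
  simp [mul_apply, signedReversal_apply, ← Fin.rev_eq_iff]

lemma neg_one_pow_val_rev (i : Fin n) :
    (-1 : R) ^ (i.rev : ℕ) = (-1) ^ (n + 1) * (-1) ^ (i : ℕ) := by
  have hn : n + 1 + i = i.rev + 2 * (i + 1) := by rw [Fin.val_rev]; omega
  rw [← pow_add, hn, pow_add, pow_mul, neg_one_sq, one_pow, mul_one]

variable (R n)

lemma signedReversal_mul_self :
    signedReversal R n * signedReversal R n = (-1 : R) ^ (n + 1) • 1 := by
  ext i j
  rw [signedReversal_mul_apply, signedReversal_apply, Fin.rev_rev, neg_one_pow_val_rev,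
    Matrix.smul_apply, smul_eq_mul]
  obtain rfl | hij := eq_or_ne i j
  · simp [mul_assoc, ← mul_pow]
  · simp [hij, hij.symm]

lemma smul_signedReversal_mul_self :
    (-1 : R) ^ (n + 1) • signedReversal R n * signedReversal R n = 1 := by
  rw [smul_mul_assoc, signedReversal_mul_self, smul_smul, ← mul_pow, neg_one_mul, neg_neg, one_pow,
    one_smul]

lemma inv_signedReversal : (signedReversal R n)⁻¹ = (-1 : R) ^ (n + 1) • signedReversal R n :=
  inv_eq_left_inv (smul_signedReversal_mul_self R n)

lemma isUnit_det_signedReversal : IsUnit (signedReversal R n).det :=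
  isUnit_det_of_left_inverse (smul_signedReversal_mul_self R n)

variable {R n}

lemma signedReversal_mul_eq_neg_mul {A : Matrix (Fin n) (Fin n) R}
    (hA : ∀ i j : Fin n, A i.rev j.rev = (-1) ^ (i + j + 1 : ℕ) * A i j) :
    signedReversal R n * A = -(A * signedReversal R n) := by
  ext i j
  have hsign : (-1 : R) ^ (i.rev : ℕ) * (-1) ^ (i + j.rev + 1 : ℕ) = -(-1) ^ (j : ℕ) := by
    have hexp : (i.rev + (i + j.rev + 1) : ℕ) = 2 * j.rev + (j + 1) := by
      simp only [Fin.val_rev]; omega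
    rw [← pow_add, hexp, pow_add, pow_mul]
    simp [pow_succ]
  calc (signedReversal R n * A) i j
      = (-1) ^ (i.rev : ℕ) * A i.rev j := signedReversal_mul_apply A i j
    _ = (-1) ^ (i.rev : ℕ) * ((-1) ^ (i + j.rev + 1 : ℕ) * A i j.rev) := by rw [← hA, Fin.rev_rev]
    _ = -(A i j.rev * (-1) ^ (j : ℕ)) := by rw [← mul_assoc, hsign]; ring
    _ = (-(A * signedReversal R n)) i j := by rw [neg_apply, mul_signedReversal_apply]

lemma inv_signedReversal_mul_mul_eq_neg {A : Matrix (Fin n) (Fin n) R}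
    (hA : ∀ i j : Fin n, A i.rev j.rev = (-1) ^ (i + j + 1 : ℕ) * A i j) :
    (signedReversal R n)⁻¹ * A * signedReversal R n = -A := by
  rw [mul_assoc, ← neg_eq_iff_eq_neg.mpr (signedReversal_mul_eq_neg_mul hA), mul_neg,
    nonsing_inv_mul_cancel_left _ _ (isUnit_det_signedReversal R n)]

end SignedReversal

/-- The tridiagonal matrix of a chain of `n` sites with on-site terms `d` and unit couplings between
neighbours; the matrix `J` of the theorem is `chainMatrix fun k => i γ_k`. -/
def chainMatrix {R : Type*} [Ring R] {n : ℕ} (d : Fin n → R) : Matrix (Fin n) (Fin n) R :=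
  of fun k m =>
    if (k : ℕ) + 1 = m then 1 else if (m : ℕ) + 1 = k then 1 else if k = m then d k else 0

lemma chainMatrix_rev_rev {R : Type*} [Ring R] {n : ℕ} {d : Fin n → R}
    (hd : ∀ k, d k.rev = -d k) (k m : Fin n) :
    chainMatrix d k.rev m.rev = (-1) ^ (k + m + 1 : ℕ) * chainMatrix d k m := by
  have hupper : (k.rev : ℕ) + 1 = m.rev ↔ (m : ℕ) + 1 = k := by simp only [Fin.val_rev]; omega
  have hlower : (m.rev : ℕ) + 1 = k.rev ↔ (k : ℕ) + 1 = m := by simp only [Fin.val_rev]; omega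
  simp only [chainMatrix, of_apply, hupper, hlower, Fin.rev_inj]
  split_ifs with hmk hkm hkm heq
  · omega
  · rw [Even.neg_one_pow ⟨m + 1, by omega⟩, one_mul]
  · rw [Even.neg_one_pow ⟨k + 1, by omega⟩, one_mul]
  · rw [Odd.neg_one_pow ⟨k, by omega⟩, neg_one_mul, hd]
  · rw [mul_zero]

theorem stmt_1_general {R : Type*} [CommRing R] [IsAddTorsionFree R] {n : ℕ}
    {J : Matrix (Fin n) (Fin n) R}
    (hJ : ∀ k m : Fin n, J k.rev m.rev = (-1) ^ (k + m + 1 : ℕ) * J k m) :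
    signedReversal R n * signedReversal R n = (-1 : R) ^ (n + 1) • 1 ∧
      (signedReversal R n)⁻¹ = (-1 : R) ^ (n + 1) • signedReversal R n ∧
      (signedReversal R n)⁻¹ * J * signedReversal R n = -J ∧
      (∀ x : R, J.charpoly.eval (-x) = (-1) ^ n * J.charpoly.eval x) ∧
      (∀ k : ℕ, Odd (n + k) → J.charpoly.coeff k = 0) := by
  have hconj := inv_signedReversal_mul_mul_eq_neg hJ
  have hparity : J.charpoly.comp (-X) = (-1) ^ n * J.charpoly := by
    simpa only [Fintype.card_fin] using
      charpoly_comp_neg_X_of_conj_eq_neg (isUnit_det_signedReversal R n) hconj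
  refine ⟨signedReversal_mul_self R n, inv_signedReversal R n, hconj, fun x => ?_,
    fun k hk => coeff_eq_zero_of_comp_neg_X_eq hparity hk⟩
  simpa [eval_comp] using congrArg (eval x) hparity

/-- With `Z` the `2N × 2N` matrix with `Z_{k,j} = (−1)^{j−1}` if `j = 2N+1−k`
(here written `0`-based: `Z k j = (−1)^j` if `j = 2N−1−k`) and zero otherwise, one has
`Z·Z = −I` (so `Z⁻¹ = −Z`), `Z⁻¹·J·Z = −J`, hence the characteristic polynomial of `J`
is even: `P(−λ) = P(λ)` for all `λ ∈ ℂ`, i.e. all odd-power coefficients vanish. -/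
theorem stmt_1 (N : ℕ) (hN : 1 ≤ N) (γ : Fin (2 * N) → ℝ)
    (hγ : ∀ k : Fin (2 * N), γ k = - γ ⟨2 * N - 1 - (k : ℕ), by have := k.isLt; omega⟩)
    (J : Matrix (Fin (2 * N)) (Fin (2 * N)) ℂ)
    (hJ : ∀ k m : Fin (2 * N), J k m =
      if (k : ℕ) + 1 = (m : ℕ) then 1
      else if (m : ℕ) + 1 = (k : ℕ) then 1
      else if k = m then Complex.I * (γ k : ℂ) else 0)
    (Z : Matrix (Fin (2 * N)) (Fin (2 * N)) ℂ)
    (hZ : ∀ k j : Fin (2 * N), Z k j =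
      if (j : ℕ) = 2 * N - 1 - (k : ℕ) then (-1 : ℂ) ^ (j : ℕ) else 0) :
    Z * Z = -1 ∧ Z⁻¹ = -Z ∧ Z⁻¹ * J * Z = -J ∧
      (∀ lam : ℂ, J.charpoly.eval (-lam) = J.charpoly.eval lam) ∧
      (∀ n : ℕ, Odd n → J.charpoly.coeff n = 0) := by
  have hval (k : Fin (2 * N)) : (k.rev : ℕ) = 2 * N - 1 - k := by rw [Fin.val_rev]; omega
  obtain rfl : Z = signedReversal ℂ (2 * N) := by
    ext k j
    simp only [hZ, signedReversal_apply, Fin.ext_iff, hval]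
  obtain rfl : J = chainMatrix fun k => Complex.I * (γ k : ℂ) := Matrix.ext hJ
  have hdiag (k : Fin (2 * N)) : Complex.I * (γ k.rev : ℂ) = -(Complex.I * (γ k : ℂ)) := by
    rw [hγ k, show k.rev = ⟨2 * N - 1 - k, by omega⟩ from Fin.ext (hval k)]
    push_cast
    ring
  simpa [pow_succ, Nat.odd_add'] using
    stmt_1_general (chainMatrix_rev_rev (d := fun k => Complex.I * (γ k : ℂ)) hdiag)
end

section
/- Let S be the 2N×2N real matrix with entries S_{n,m} = sin(n·m·π/(2N+1)) for 1 ≤ n, m ≤ 2N. Then S·S = ((2N+1)/2)·I, so S is invertible with S^{−1} = (2/(2N+1))·S, and S diagonalizes H: S^{−1}·H·S is the diagonal matrix with diagonal entries 2·cos(m·π/(2N+1)) for m = 1, …, 2N; equivalently, for every m, the m-th column of S is an eigenvector of H with eigenvalue 2·cos(m·π/(2N+1)). -/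
/-!
Write `θ = π / (n + 1)`. The vector `l ↦ sin (l m θ)` vanishes at `l = 0` and `l = n + 1`, so on the
path with vertices `1, …, n` the sum over the neighbours of `l` is always
`sin ((l - 1) m θ) + sin ((l + 1) m θ) = 2 cos (m θ) sin (l m θ)`. The columns of `S` are therefore
eigenvectors of `H`. By the product formula their inner products are half the difference of
`∑ cos (l (a - b) θ)` and `∑ cos (l (a + b) θ)`. Unless `2 (n + 1)` divides `j`, the sum
`∑ cos (l j θ)` over `0 ≤ l ≤ n` depends only on the parity of `j`. As `a - b` and `a + b` have the
same parity, distinct columns are orthogonal; for `a = b` the two sums are `n + 1` and `0`.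
-/

open Finset Matrix Real SimpleGraph

theorem sin_int_mul_pi_div_ne_zero {n : ℕ} (hn : n ≠ 0) {j : ℤ} (hj : ¬ (n : ℤ) ∣ j) :
    sin (j * π / n) ≠ 0 := by
  intro hsin
  obtain ⟨q, hq⟩ := sin_eq_zero_iff.mp hsin
  have hjq : (q : ℝ) * n = j := by
    field_simp at hq
    exact hq
  exact hj (Dvd.intro_left q (by exact_mod_cast hjq))

theorem sum_range_cos_int_mul_pi_div {M : ℕ} (hM : M ≠ 0) {j : ℤ} (hj : ¬ (2 * M : ℤ) ∣ j) :
    ∑ k ∈ range M, cos (j * π / M * k) = (1 - cos (j * π)) / 2 := by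
  have hsin : sin (j * π / M / 2) ≠ 0 := by
    have h := sin_int_mul_pi_div_ne_zero (n := M * 2) (by omega) (by push_cast; rwa [mul_comm])
    rwa [Nat.cast_mul, Nat.cast_ofNat, ← div_div] at h
  refine mul_left_cancel₀ hsin ?_
  calc sin (j * π / M / 2) * ∑ k ∈ range M, cos (j * π / M * k)
      = sin (j * π / 2) * cos (j * π / 2 - j * π / M / 2) := by
        have h := sin_mul_sum_cos M (j * π / M) 0
        simp only [add_zero] at h
        rw [h]
        congr 2 <;> field_simp
    _ = (sin (j * π / M / 2) + sin (j * π - j * π / M / 2)) / 2 := by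
        rw [eq_div_iff two_ne_zero, mul_comm, ← mul_assoc, two_mul_sin_mul_cos]
        ring_nf
    _ = sin (j * π / M / 2) * ((1 - cos (j * π)) / 2) := by
        rw [sin_sub, sin_int_mul_pi]
        ring

theorem sum_range_cos_int_mul_pi_div_of_dvd {M : ℕ} {j : ℤ} (hj : (2 * M : ℤ) ∣ j) :
    ∑ k ∈ range M, cos (j * π / M * k) = M := by
  obtain rfl | hM := eq_or_ne M 0
  · simp
  obtain ⟨q, rfl⟩ := hj
  have hcos (k : ℕ) : cos (((2 * M * q : ℤ) : ℝ) * π / M * k) = 1 := by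
    rw [← cos_int_mul_two_pi (q * k)]
    congr 1
    push_cast
    field_simp
  simp only [hcos, sum_const, card_range, nsmul_eq_mul, mul_one]

theorem cos_int_mul_pi_add_eq_sub (a b : ℤ) : cos ((a + b : ℤ) * π) = cos ((a - b : ℤ) * π) := by
  push_cast
  rw [add_mul, sub_mul, cos_add, cos_sub, sin_int_mul_pi]
  ring

theorem sum_range_sin_mul_sin {M : ℕ} {a b : ℤ} (hadd : ¬ (2 * M : ℤ) ∣ a + b) :
    ∑ k ∈ range M, sin (a * π / M * k) * sin (b * π / M * k) =
      if (2 * M : ℤ) ∣ a - b then (M : ℝ) / 2 else 0 := by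
  obtain rfl | hM := eq_or_ne M 0
  · simp
  have hprod (k : ℕ) : sin (a * π / M * k) * sin (b * π / M * k) =
      (cos ((a - b : ℤ) * π / M * k) - cos ((a + b : ℤ) * π / M * k)) / 2 := by
    rw [eq_div_iff two_ne_zero, mul_comm, ← mul_assoc, two_mul_sin_mul_sin]
    push_cast
    ring_nf
  simp only [hprod]
  rw [← sum_div, sum_sub_distrib, sum_range_cos_int_mul_pi_div hM hadd, cos_int_mul_pi_add_eq_sub]
  split_ifs with hsub
  · have hcos : cos ((a - b : ℤ) * π) = 1 := by
      obtain ⟨q, hq⟩ := hsub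
      rw [hq, ← cos_int_mul_two_pi (M * q)]
      push_cast
      ring_nf
    rw [sum_range_cos_int_mul_pi_div_of_dvd hsub, hcos]
    ring
  · rw [sum_range_cos_int_mul_pi_div hM hsub]
    ring

theorem pathGraph_adjMatrix_mulVec {R : Type*} [NonAssocSemiring R] {n : ℕ}
    [DecidableRel (pathGraph n).Adj] {f : ℕ → R} (h_zero : f 0 = 0) (h_last : f (n + 1) = 0) :
    (pathGraph n).adjMatrix R *ᵥ (fun k ↦ f (k + 1)) = fun k : Fin n ↦ f k + f (k + 2) := by
  ext k
  calc ((pathGraph n).adjMatrix R *ᵥ fun l ↦ f (l + 1)) k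
      = ∑ l ∈ range n, if l + 1 = k ∨ l + 1 = k + 2 then f (l + 1) else 0 := by
        rw [← Fin.sum_univ_eq_sum_range
          fun l ↦ if l + 1 = (k : ℕ) ∨ l + 1 = k + 2 then f (l + 1) else 0]
        simp [mulVec, dotProduct, adjMatrix_apply, pathGraph_adj, or_comm, eq_comm]
    _ = ∑ l ∈ range (n + 2), if l = k ∨ l = k + 2 then f l else 0 := by
        rw [sum_range_succ, sum_range_succ']
        simp [h_zero, h_last]
    _ = ∑ l ∈ ({↑k, ↑k + 2} : Finset ℕ), f l := by
        rw [← sum_filter]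
        congr 1
        ext l
        simp only [mem_filter, mem_range, mem_insert, mem_singleton]
        omega
    _ = f k + f (k + 2) := sum_pair (by omega)

theorem inv_mul_mul_eq_diagonal {ι R : Type*} [Fintype ι] [DecidableEq ι] [CommRing R]
    {A P : Matrix ι ι R} {d : ι → R} (hP : IsUnit P.det) (h : ∀ j, A *ᵥ P.col j = d j • P.col j) :
    P⁻¹ * A * P = diagonal d := by
  have hAP : A * P = P * diagonal d := by
    ext i j
    rw [mul_diagonal, mul_comm]
    exact congrFun (h j) i
  rw [Matrix.mul_assoc, hAP, nonsing_inv_mul_cancel_left _ _ hP]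

/-- The matrix of the discrete sine transform of length `n`, without normalization. The index
`j : Fin n` stands for the frequency or node `j + 1`, those at `0` being left out because they
contribute only `sin 0`. -/
noncomputable def sineMatrix (n : ℕ) : Matrix (Fin n) (Fin n) ℝ :=
  of fun j m ↦ sin ((j + 1) * (m + 1) * π / (n + 1))

namespace sineMatrix

variable (n : ℕ)

theorem isSymm : (sineMatrix n).IsSymm := by
  ext j m
  simp only [transpose_apply, sineMatrix, of_apply, mul_comm ((m : ℝ) + 1)]

variable {n}

theorem apply_eq_sin_mul_succ (j m : Fin n) :
    sineMatrix n j m = sin ((j + 1) * π / (n + 1) * (m + 1 : ℕ)) := by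
  rw [sineMatrix, of_apply]
  push_cast
  ring_nf

theorem sum_apply_mul_apply (j m : Fin n) :
    ∑ k, sineMatrix n j k * sineMatrix n m k = if j = m then ((n : ℝ) + 1) / 2 else 0 := by
  have hsub : (2 * (n + 1 : ℕ) : ℤ) ∣ (j + 1 : ℤ) - (m + 1) ↔ j = m := by
    refine ⟨fun h ↦ Fin.ext ?_, fun h ↦ by simp [h]⟩
    have := Int.eq_zero_of_abs_lt_dvd h (by rw [abs_lt]; omega)
    omega
  have hadd : ¬ (2 * (n + 1 : ℕ) : ℤ) ∣ (j + 1 : ℤ) + (m + 1) := fun h ↦ by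
    have := Int.le_of_dvd (by omega) h
    omega
  have horth := sum_range_sin_mul_sin hadd
  simp only [hsub, Int.cast_add, Int.cast_natCast, Int.cast_one,
    Nat.cast_add_one (R := ℝ)] at horth
  rw [← horth, sum_range_succ', ← Fin.sum_univ_eq_sum_range fun k ↦
    sin ((j + 1) * π / (n + 1) * (k + 1 : ℕ)) * sin ((m + 1) * π / (n + 1) * (k + 1 : ℕ))]
  simp only [apply_eq_sin_mul_succ, Nat.cast_zero, mul_zero, sin_zero, add_zero]

variable (n)

theorem mul_self : sineMatrix n * sineMatrix n = (((n : ℝ) + 1) / 2) • 1 := by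
  ext j m
  simp only [mul_apply, (isSymm n).apply m, sum_apply_mul_apply, Matrix.smul_apply, one_apply,
    smul_eq_mul, mul_ite, mul_one, mul_zero]

theorem smul_mul_self : ((2 / ((n : ℝ) + 1)) • sineMatrix n) * sineMatrix n = 1 := by
  rw [smul_mul, mul_self, smul_smul, div_mul_div_cancel₀ n.cast_add_one_ne_zero,
    div_self two_ne_zero, one_smul]

theorem inv_eq_smul : (sineMatrix n)⁻¹ = (2 / ((n : ℝ) + 1)) • sineMatrix n :=
  inv_eq_left_inv (smul_mul_self n)

theorem isUnit_det : IsUnit (sineMatrix n).det :=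
  isUnit_det_of_left_inverse (smul_mul_self n)

variable {n}

theorem pathGraph_adjMatrix_mulVec_col [DecidableRel (pathGraph n).Adj] (m : Fin n) :
    (pathGraph n).adjMatrix ℝ *ᵥ (sineMatrix n).col m =
      (2 * cos ((m + 1) * π / (n + 1))) • (sineMatrix n).col m := by
  set x : ℝ := (m + 1) * π / (n + 1) with hx
  have hcol : (sineMatrix n).col m = fun j : Fin n ↦ sin ((j + 1 : ℕ) * x) := by
    ext j
    rw [col_apply, (isSymm n).apply, apply_eq_sin_mul_succ, mul_comm]
  have h_last : sin ((n + 1 : ℕ) * x) = 0 := by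
    rw [← sin_nat_mul_pi (m + 1), hx]
    push_cast
    field_simp
  rw [hcol, pathGraph_adjMatrix_mulVec (f := fun l ↦ sin (l * x)) (by simp) h_last]
  ext j
  calc sin (j * x) + sin ((j + 2 : ℕ) * x)
      = sin ((j + 1 : ℕ) * x - x) + sin ((j + 1 : ℕ) * x + x) := by
        push_cast
        ring_nf
    _ = 2 * cos x * sin ((j + 1 : ℕ) * x) := by
        rw [← two_mul_sin_mul_cos]
        ring

end sineMatrix

theorem stmt_3_general (n : ℕ)
    (H : Matrix (Fin n) (Fin n) ℝ)
    (hH : ∀ k m : Fin n, H k m =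
      if (k : ℕ) + 1 = (m : ℕ) then 1 else if (m : ℕ) + 1 = (k : ℕ) then 1 else 0)
    (S : Matrix (Fin n) (Fin n) ℝ)
    (hS : ∀ j m : Fin n, S j m = sin ((((j : ℕ) : ℝ) + 1) * (((m : ℕ) : ℝ) + 1) * π / (n + 1))) :
    S * S = (((n : ℝ) + 1) / 2) • (1 : Matrix (Fin n) (Fin n) ℝ) ∧
    S⁻¹ = (2 / ((n : ℝ) + 1)) • S ∧
    S⁻¹ * H * S = diagonal (fun m : Fin n ↦ 2 * cos ((((m : ℕ) : ℝ) + 1) * π / (n + 1))) ∧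
    ∀ m : Fin n, H *ᵥ (fun j ↦ S j m) =
      (2 * cos ((((m : ℕ) : ℝ) + 1) * π / (n + 1))) • (fun j ↦ S j m) := by
  classical
  obtain rfl : S = sineMatrix n := Matrix.ext hS
  obtain rfl : H = (pathGraph n).adjMatrix ℝ := by
    ext k m
    simp only [hH, adjMatrix_apply, pathGraph_adj, ite_or]
  have heigen := sineMatrix.pathGraph_adjMatrix_mulVec_col (n := n)
  exact ⟨sineMatrix.mul_self n, sineMatrix.inv_eq_smul n,
    inv_mul_mul_eq_diagonal (sineMatrix.isUnit_det n) heigen, heigen⟩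

/-- Let `S` be the `2N × 2N` real matrix with entries
`S_{n,m} = sin(n m π/(2N+1))` (written `0`-based: `S n m = sin((n+1)(m+1)π/(2N+1))`).
Then `S·S = ((2N+1)/2)·I`, so `S⁻¹ = (2/(2N+1))·S`, and `S` diagonalizes the free
coupling matrix `H`: `S⁻¹·H·S = diag(2cos(mπ/(2N+1)))_{m=1}^{2N}`; equivalently, each
column of `S` is an eigenvector of `H` with eigenvalue `2cos(mπ/(2N+1))`. -/
theorem stmt_3 (N : ℕ) (hN : 1 ≤ N)
    (H : Matrix (Fin (2 * N)) (Fin (2 * N)) ℝ)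
    (hH : ∀ k m : Fin (2 * N), H k m =
      if (k : ℕ) + 1 = (m : ℕ) then 1
      else if (m : ℕ) + 1 = (k : ℕ) then 1 else 0)
    (S : Matrix (Fin (2 * N)) (Fin (2 * N)) ℝ)
    (hS : ∀ n m : Fin (2 * N), S n m =
      Real.sin ((((n : ℕ) : ℝ) + 1) * (((m : ℕ) : ℝ) + 1) * Real.pi / (2 * (N : ℝ) + 1))) :
    S * S = ((2 * (N : ℝ) + 1) / 2) • (1 : Matrix (Fin (2 * N)) (Fin (2 * N)) ℝ) ∧
    S⁻¹ = (2 / (2 * (N : ℝ) + 1)) • S ∧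
    S⁻¹ * H * S = Matrix.diagonal
      (fun m : Fin (2 * N) => 2 * Real.cos ((((m : ℕ) : ℝ) + 1) * Real.pi / (2 * (N : ℝ) + 1))) ∧
    ∀ m : Fin (2 * N), H.mulVec (fun n => S n m) =
      (2 * Real.cos ((((m : ℕ) : ℝ) + 1) * Real.pi / (2 * (N : ℝ) + 1))) • (fun n => S n m) := by
  exact_mod_cast stmt_3_general (2 * N) H hH S (by exact_mod_cast hS)
end

section
/- Define Γ := max_{1 ≤ k ≤ 2N} |γ_k|. If Γ ≤ (1/(2N))·sin²(π/(2(2N+1))), then every eigenvalue of the matrix J is real. -/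
/-!
Write the matrix as `A + B`, with `A` the adjacency matrix of the path and `B` the diagonal of the
`i γ k`, and let `P` be the reflection of the path. The discrete sine vectors diagonalize `A` and
`P` simultaneously, with alternating parity, and `P * B` is Hermitian. If `(A + B) x = μ x`, then
`⟪x, P (B x)⟫` is real, while in the sine basis its imaginary part is `μ.im * ⟪x, P x⟫`. So, for
non-real `μ`, the even and odd parts of `x` carry the same mass. As even and odd eigenvalues of `A`
are at least `g` apart, this forces
`‖B x‖ ^ 2 = ‖(A - μ) x‖ ^ 2 ≥ ((g / 2) ^ 2 + μ.im ^ 2) * ‖x‖ ^ 2`, which is impossible when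
`‖B‖ ≤ g / 2`. The smallest gap of the path is `2 * (cos (π / (n + 1)) - cos (2 * π / (n + 1)))`.
-/

open Finset Matrix Module
open scoped InnerProductSpace

section Perturbation

-- Only pairs of opposite sign contribute, and they obey
-- `(a j - x) ^ 2 + (a k - x) ^ 2 ≥ (a j - a k) ^ 2 / 2`; sum over all pairs with weights
-- `(1 - ε j * ε k) * w j * w k`.
lemma sq_half_gap_mul_sum_le {ι : Type*} [Fintype ι] {w ε a : ι → ℝ} {g : ℝ} (hw : ∀ j, 0 ≤ w j)
    (hε : ∀ j, |ε j| = 1) (hg : 0 ≤ g) (hgap : ∀ j k, ε j ≠ ε k → g ≤ |a j - a k|)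
    (hsum : ∑ j, ε j * w j = 0) (x : ℝ) :
    (g / 2) ^ 2 * ∑ j, w j ≤ ∑ j, (a j - x) ^ 2 * w j := by
  have hpair (j k : ι) : g ^ 2 / 2 * ((1 - ε j * ε k) * (w j * w k)) ≤
      ((a j - x) ^ 2 + (a k - x) ^ 2) * ((1 - ε j * ε k) * (w j * w k)) := by
    by_cases hjk : ε j = ε k
    · simp [hjk, ← sq, ← sq_abs (ε k), hε]
    · have hcoeff : 0 ≤ 1 - ε j * ε k := by
        simpa [abs_mul, hε] using le_abs_self (ε j * ε k)
      refine mul_le_mul_of_nonneg_right ?_ (mul_nonneg hcoeff (mul_nonneg (hw j) (hw k)))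
      have hsq : g ^ 2 ≤ (a j - a k) ^ 2 :=
        sq_le_sq.mpr ((abs_of_nonneg hg).trans_le (hgap j k hjk))
      linarith [sq_nonneg ((a j - x) + (a k - x))]
  have hmass : ∑ j, ∑ k, (1 - ε j * ε k) * (w j * w k) = (∑ j, w j) * ∑ j, w j := by
    calc _ = (∑ j, w j) * (∑ j, w j) - (∑ j, ε j * w j) * ∑ j, ε j * w j := by
          simp only [sum_mul_sum, ← sum_sub_distrib]
          exact sum_congr rfl fun j _ => sum_congr rfl fun k _ => by ring
      _ = _ := by simp [hsum]
  have hspread : ∑ j, ∑ k, ((a j - x) ^ 2 + (a k - x) ^ 2) * ((1 - ε j * ε k) * (w j * w k)) =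
      2 * (∑ j, (a j - x) ^ 2 * w j) * ∑ j, w j := by
    calc _ = (∑ j, (a j - x) ^ 2 * w j) * (∑ j, w j) + (∑ j, w j) * (∑ j, (a j - x) ^ 2 * w j)
          - (∑ j, (a j - x) ^ 2 * (ε j * w j)) * (∑ j, ε j * w j)
          - (∑ j, ε j * w j) * ∑ j, (a j - x) ^ 2 * (ε j * w j) := by
          simp only [sum_mul_sum, ← sum_sub_distrib, ← sum_add_distrib]
          exact sum_congr rfl fun j _ => sum_congr rfl fun k _ => by ring
      _ = _ := by rw [hsum]; ring
  have hle := sum_le_sum fun j (_ : j ∈ univ) => sum_le_sum fun k (_ : k ∈ univ) => hpair j k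
  simp only [← mul_sum, hmass, hspread] at hle
  rcases (sum_nonneg fun j _ => hw j : 0 ≤ ∑ j, w j).eq_or_lt with hzero | hpos
  · rw [← hzero, mul_zero]
    exact sum_nonneg fun j _ => mul_nonneg (sq_nonneg _) (hw j)
  · refine le_of_mul_le_mul_right ?_ hpos
    linarith

lemma inner_apply_of_apply_eq_smul {ι 𝕜 E : Type*} [Fintype ι] [RCLike 𝕜] [NormedAddCommGroup E]
    [InnerProductSpace 𝕜 E] (b : OrthonormalBasis ι 𝕜 E) {T : E →ₗ[𝕜] E} {a : ι → 𝕜}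
    (hT : ∀ j, T (b j) = a j • b j) (j : ι) (x : E) : ⟪b j, T x⟫_𝕜 = a j * ⟪b j, x⟫_𝕜 := by
  classical
  conv_lhs => rw [← b.sum_repr' x]
  simp [hT, inner_sum, inner_smul_right, b.inner_eq_ite, mul_comm]

variable {ι E : Type*} [Fintype ι] [NormedAddCommGroup E] [InnerProductSpace ℂ E]
  {b : OrthonormalBasis ι ℂ E} {A B P : E →ₗ[ℂ] E} {a ε : ι → ℝ} {μ : ℂ} {x : E}

lemma inner_perturbation_apply (hA : ∀ j, A (b j) = (a j : ℂ) • b j)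
    (hx : (A + B) x = μ • x) (j : ι) : ⟪b j, B x⟫_ℂ = (μ - a j) * ⟪b j, x⟫_ℂ := by
  rw [show B x = μ • x - A x from eq_sub_of_add_eq' hx, inner_sub_right, inner_smul_right,
    inner_apply_of_apply_eq_smul b hA, sub_mul]

lemma sum_sign_mul_sq_norm_inner_eq_zero (hA : ∀ j, A (b j) = (a j : ℂ) • b j)
    (hP : ∀ j, P (b j) = (ε j : ℂ) • b j) (hPB : (P ∘ₗ B).IsSymmetric)
    (hx : (A + B) x = μ • x) (hμ : μ.im ≠ 0) : ∑ j, ε j * ‖⟪b j, x⟫_ℂ‖ ^ 2 = 0 := by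
  have hinner : ⟪x, P (B x)⟫_ℂ =
      ∑ j, ((ε j * ‖⟪b j, x⟫_ℂ‖ ^ 2 : ℝ) : ℂ) * (μ - a j) := by
    rw [← b.sum_inner_mul_inner]
    refine sum_congr rfl fun j _ => ?_
    rw [inner_apply_of_apply_eq_smul b hP, inner_perturbation_apply hA hx, ← inner_conj_symm x]
    push_cast
    rw [← Complex.conj_mul']
    ring
  have him : (⟪x, P (B x)⟫_ℂ).im = 0 := hPB.im_inner_self_apply x
  rw [hinner, Complex.im_sum] at him
  simp only [Complex.im_ofReal_mul, Complex.sub_im, Complex.ofReal_im, sub_zero,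
    ← sum_mul] at him
  exact (mul_eq_zero.mp him).resolve_right hμ

lemma sq_norm_perturbation_apply (hA : ∀ j, A (b j) = (a j : ℂ) • b j)
    (hx : (A + B) x = μ • x) :
    ‖B x‖ ^ 2 = ∑ j, (a j - μ.re) ^ 2 * ‖⟪b j, x⟫_ℂ‖ ^ 2 + μ.im ^ 2 * ‖x‖ ^ 2 := by
  rw [← b.sum_sq_norm_inner_right, ← b.sum_sq_norm_inner_right x, mul_sum, ← sum_add_distrib]
  refine sum_congr rfl fun j _ => ?_
  rw [inner_perturbation_apply hA hx, norm_mul, mul_pow, Complex.sq_norm, Complex.normSq_apply]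
  simp only [Complex.sub_re, Complex.ofReal_re, Complex.sub_im, Complex.ofReal_im, sub_zero]
  ring

theorem im_eq_zero_of_hasEigenvalue_add {g : ℝ} (hA : ∀ j, A (b j) = (a j : ℂ) • b j)
    (hP : ∀ j, P (b j) = (ε j : ℂ) • b j) (hε : ∀ j, |ε j| = 1)
    (hgap : ∀ j k, ε j ≠ ε k → g ≤ |a j - a k|) (hPB : (P ∘ₗ B).IsSymmetric)
    (hB : ∀ x, ‖B x‖ ≤ g / 2 * ‖x‖) (hμ : End.HasEigenvalue (A + B) μ) : μ.im = 0 := by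
  by_contra him
  obtain ⟨x, hx⟩ := hμ.exists_hasEigenvector
  have hx_pos : 0 < ‖x‖ := norm_pos_iff.mpr hx.2
  have hg : 0 ≤ g := by
    have := nonneg_of_mul_nonneg_left ((norm_nonneg _).trans (hB x)) hx_pos
    linarith
  have hspread := sq_half_gap_mul_sum_le (fun j => sq_nonneg _) hε hg hgap
    (sum_sign_mul_sq_norm_inner_eq_zero hA hP hPB hx.apply_eq_smul him) μ.re
  rw [b.sum_sq_norm_inner_right] at hspread
  have hbound : ‖B x‖ ^ 2 ≤ (g / 2) ^ 2 * ‖x‖ ^ 2 := by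
    rw [← mul_pow]; gcongr; exact hB x
  rw [sq_norm_perturbation_apply hA hx.apply_eq_smul] at hbound
  have : 0 < μ.im ^ 2 * ‖x‖ ^ 2 := by positivity
  linarith

end Perturbation

section PathGraph

open Real SimpleGraph

lemma sin_le_sin_of_mem_Icc {θ x : ℝ} (hθ : 0 ≤ θ) (hx : x ∈ Set.Icc θ (π - θ)) :
    sin θ ≤ sin x := by
  have := hx.1.trans hx.2
  simpa using strictConcaveOn_sin_Icc.concaveOn.min_le_of_mem_Icc
    ⟨hθ, by linarith⟩ ⟨by linarith, by linarith⟩ hx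

lemma cos_sub_cos_two_mul_le {φ p q : ℝ} (hφ : 0 ≤ φ) (hp : 1 ≤ p) (hpq : p + 1 ≤ q)
    (hq : (q + 1) * φ ≤ π) :
    cos φ - cos (2 * φ) ≤ cos (p * φ) - cos (q * φ) := by
  have hprod (s t : ℝ) : cos (s * φ) - cos (t * φ) =
      2 * (sin ((s + t) * (φ / 2)) * sin ((t - s) * (φ / 2))) := by
    rw [cos_sub_cos, show (s * φ - t * φ) / 2 = -((t - s) * (φ / 2)) by ring, sin_neg]
    ring_nf
  have hfirst := hprod 1 2
  rw [one_mul] at hfirst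
  rw [hfirst, hprod]
  have hsum : sin ((1 + 2) * (φ / 2)) ≤ sin ((p + q) * (φ / 2)) :=
    sin_le_sin_of_mem_Icc (by positivity) ⟨by nlinarith, by nlinarith⟩
  have hdiff : sin ((2 - 1) * (φ / 2)) ≤ sin ((q - p) * (φ / 2)) :=
    sin_le_sin_of_mem_Icc (by linarith) ⟨by nlinarith, by nlinarith⟩
  have hs1 : 0 ≤ sin ((2 - 1) * (φ / 2)) :=
    sin_nonneg_of_nonneg_of_le_pi (by linarith) (by nlinarith)
  have hs3 : 0 ≤ sin ((p + q) * (φ / 2)) :=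
    sin_nonneg_of_nonneg_of_le_pi (by nlinarith) (by nlinarith)
  gcongr

lemma two_mul_sin_sq_le_cos_sub_cos_two_mul {φ : ℝ} (hφ : 0 ≤ cos φ) :
    2 * sin (φ / 2) ^ 2 ≤ cos φ - cos (2 * φ) := by
  rw [sin_sq_eq_half_sub, mul_div_cancel₀ φ two_ne_zero, cos_two_mul]
  nlinarith [cos_le_one φ]

instance pathGraphDecidableRelAdj (n : ℕ) : DecidableRel (pathGraph n).Adj :=
  fun _ _ => decidable_of_iff' _ pathGraph_adj

lemma adjMatrix_pathGraph_mulVec {R : Type*} [NonAssocSemiring R] {n : ℕ} {f : ℕ → R}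
    (h0 : f 0 = 0) (hn : f (n + 1) = 0) (k : Fin n) :
    ((pathGraph n).adjMatrix R *ᵥ fun m => f (m + 1)) k = f k + f (k + 2) := by
  have hsplit (m : ℕ) : (if (k : ℕ) + 1 = m ∨ m + 1 = k then 1 else 0) * f (m + 1) =
      (if m + 1 = k then f (m + 1) else 0) + if (k : ℕ) + 1 = m then f (m + 1) else 0 := by
    split_ifs <;> first | omega | simp
  have hleft : ∑ m ∈ range n, (if m + 1 = (k : ℕ) then f (m + 1) else 0) = f k := by
    have := sum_range_succ' (fun m => if m = (k : ℕ) then f m else 0) n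
    simpa [h0, Nat.lt_succ_of_lt k.isLt] using this.symm
  have hright : ∑ m ∈ range n, (if (k : ℕ) + 1 = m then f (m + 1) else 0) = f (k + 2) := by
    rw [sum_ite_eq]
    split_ifs with hk
    · rfl
    · rw [show (k : ℕ) + 2 = n + 1 by grind, hn]
  simp only [mulVec, dotProduct, adjMatrix_apply, pathGraph_adj]
  rw [Fin.sum_univ_eq_sum_range
    (fun m => (if (k : ℕ) + 1 = m ∨ m + 1 = k then 1 else 0) * f (m + 1))]
  simp only [hsplit, sum_add_distrib, hleft, hright]

/-- The angle of the `j`-th eigenvector of the path on `n` vertices. The count of `j` starts at `0`,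
so the angles are `π / (n + 1), 2 * π / (n + 1), …`. -/
noncomputable def pathAngle (n j : ℕ) : ℝ := (j + 1) * (π / (n + 1))

/-- The `j`-th eigenvalue of the adjacency matrix of the path on `n` vertices, in decreasing order
for `j < n`. -/
noncomputable def pathEigenvalue (n j : ℕ) : ℝ := 2 * cos (pathAngle n j)

lemma pathAngle_mem_Ioo {n : ℕ} (j : Fin n) : pathAngle n j ∈ Set.Ioo 0 π := by
  have hj : ((j : ℕ) : ℝ) < n := by exact_mod_cast j.isLt
  constructor
  · unfold pathAngle; positivity
  · rw [pathAngle, ← mul_div_assoc, div_lt_iff₀ (by positivity), mul_comm]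
    gcongr

lemma pathAngle_injective (n : ℕ) : Function.Injective (pathAngle n) := by
  intro j k hjk
  have : π / ((n : ℝ) + 1) ≠ 0 := by positivity
  simpa [pathAngle, this] using hjk

lemma pathEigenvalue_injective (n : ℕ) :
    Function.Injective fun j : Fin n => pathEigenvalue n j := by
  intro j k hjk
  have hcos : cos (pathAngle n j) = cos (pathAngle n k) := mul_left_cancel₀ two_ne_zero hjk
  exact Fin.ext (pathAngle_injective n (injOn_cos (Set.Ioo_subset_Icc_self (pathAngle_mem_Ioo j))
    (Set.Ioo_subset_Icc_self (pathAngle_mem_Ioo k)) hcos))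

lemma add_one_mul_pathAngle (n j : ℕ) : ((n : ℝ) + 1) * pathAngle n j = (j + 1 : ℕ) * π := by
  unfold pathAngle
  push_cast
  field_simp

/-- The `j`-th eigenvector of the path on `n` vertices, not normalized. The vertex `k : Fin n` has
position `k + 1`, so that the sine vanishes at the two missing neighbours `0` and `n + 1`. -/
noncomputable def sineVector (n j : ℕ) : EuclideanSpace ℂ (Fin n) :=
  WithLp.toLp 2 fun k => (sin (((k : ℕ) + 1) * pathAngle n j) : ℂ)

lemma toEuclideanLin_adjMatrix_sineVector (n j : ℕ) :
    toEuclideanLin ((pathGraph n).adjMatrix ℂ) (sineVector n j) =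
      (pathEigenvalue n j : ℂ) • sineVector n j := by
  have hend : sin (((n + 1 : ℕ) : ℝ) * pathAngle n j) = 0 := by
    rw [Nat.cast_succ, add_one_mul_pathAngle, sin_nat_mul_pi]
  ext k
  have hshift := adjMatrix_pathGraph_mulVec
    (f := fun m : ℕ => (sin (m * pathAngle n j) : ℂ)) (by simp)
    (Complex.ofReal_eq_zero.mpr hend) k
  have htrig : sin ((k : ℕ) * pathAngle n j) + sin (((k + 2 : ℕ) : ℝ) * pathAngle n j) =
      2 * cos (pathAngle n j) * sin (((k : ℕ) + 1) * pathAngle n j) := by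
    rw [mul_right_comm, two_mul_sin_mul_cos]
    push_cast
    ring_nf
  push_cast at hshift
  simp only [toLpLin_apply, sineVector, pathEigenvalue, PiLp.smul_apply, smul_eq_mul,
    ← Complex.ofReal_mul, ← htrig]
  push_cast
  exact hshift

lemma toEuclideanLin_revPerm_sineVector (n j : ℕ) :
    toEuclideanLin (Fin.revPerm.permMatrix ℂ) (sineVector n j) =
      (((-1) ^ j : ℝ) : ℂ) • sineVector n j := by
  ext k
  have hrev : ((Fin.rev k : ℕ) : ℝ) + 1 = (n + 1) - (k + 1) := by
    rw [Fin.val_rev, Nat.cast_sub (by omega)]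
    push_cast
    ring
  simp only [toLpLin_apply, sineVector, permMatrix_mulVec, PiLp.smul_apply, smul_eq_mul,
    Function.comp_apply, Fin.revPerm_apply, ← Complex.ofReal_mul]
  rw [hrev, sub_mul, add_one_mul_pathAngle, sin_nat_mul_pi_sub, pow_succ]
  ring_nf

lemma sineVector_ne_zero {n : ℕ} (j : Fin n) : sineVector n j ≠ 0 := by
  intro hzero
  have hfirst : sin (pathAngle n j) = 0 := by
    simpa [sineVector, ← Complex.ofReal_sin] using
      congrArg (fun v => v ⟨0, j.pos⟩) hzero
  exact (sin_pos_of_mem_Ioo (pathAngle_mem_Ioo j)).ne' hfirst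

lemma inner_sineVector_of_ne {n : ℕ} {j k : Fin n} (hjk : j ≠ k) :
    ⟪sineVector n j, sineVector n k⟫_ℂ = 0 := by
  have hsymm : (toEuclideanLin ((pathGraph n).adjMatrix ℂ)).IsSymmetric :=
    isSymmetric_toEuclideanLin_iff.mpr (isHermitian_adjMatrix ..)
  have hne : (pathEigenvalue n j : ℂ) ≠ pathEigenvalue n k :=
    Complex.ofReal_injective.ne fun h => hjk (pathEigenvalue_injective n h)
  exact hsymm.orthogonalFamily_eigenspaces hne
    ⟨_, End.mem_eigenspace_iff.mpr (toEuclideanLin_adjMatrix_sineVector n j)⟩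
    ⟨_, End.mem_eigenspace_iff.mpr (toEuclideanLin_adjMatrix_sineVector n k)⟩

/-- The orthonormal basis of normalized sine vectors. Gram–Schmidt only rescales them, as they are
orthogonal. -/
noncomputable def sineBasis (n : ℕ) : OrthonormalBasis (Fin n) ℂ (EuclideanSpace ℂ (Fin n)) :=
  InnerProductSpace.gramSchmidtOrthonormalBasis finrank_euclideanSpace
    fun j : Fin n => sineVector n j

lemma sineBasis_apply {n : ℕ} (j : Fin n) :
    sineBasis n j = (‖sineVector n j‖⁻¹ : ℂ) • sineVector n j :=
  InnerProductSpace.gramSchmidtOrthonormalBasis_apply_of_orthogonal _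
    (fun _ _ => inner_sineVector_of_ne) (sineVector_ne_zero j)

lemma toEuclideanLin_adjMatrix_sineBasis {n : ℕ} (j : Fin n) :
    toEuclideanLin ((pathGraph n).adjMatrix ℂ) (sineBasis n j) =
      (pathEigenvalue n j : ℂ) • sineBasis n j := by
  rw [sineBasis_apply, map_smul, toEuclideanLin_adjMatrix_sineVector, smul_comm]

lemma toEuclideanLin_revPerm_sineBasis {n : ℕ} (j : Fin n) :
    toEuclideanLin (Fin.revPerm.permMatrix ℂ) (sineBasis n j) =
      (((-1) ^ (j : ℕ) : ℝ) : ℂ) • sineBasis n j := by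
  rw [sineBasis_apply, map_smul, toEuclideanLin_revPerm_sineVector, smul_comm]

lemma two_mul_cos_sub_cos_le_abs_pathEigenvalue_sub {n : ℕ} {j k : Fin n} (hjk : j ≠ k) :
    2 * (cos (π / (n + 1)) - cos (2 * (π / (n + 1)))) ≤
      |pathEigenvalue n j - pathEigenvalue n k| := by
  wlog hlt : j < k generalizing j k
  · rw [abs_sub_comm]
    exact this hjk.symm (lt_of_le_of_ne (not_lt.mp hlt) hjk.symm)
  have hk : ((k : ℕ) : ℝ) + 1 ≤ n := by exact_mod_cast k.isLt
  have hjk' : ((j : ℕ) : ℝ) + 1 ≤ k := by exact_mod_cast hlt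
  have hcos := cos_sub_cos_two_mul_le (φ := π / (n + 1)) (p := (j : ℕ) + 1)
    (q := (k : ℕ) + 1) (by positivity) (by simp) (by linarith) (by
      rw [← mul_div_assoc, div_le_iff₀ (by positivity), mul_comm]
      gcongr)
  rw [pathEigenvalue, pathEigenvalue, ← mul_sub, abs_mul, abs_two]
  gcongr
  exact hcos.trans (le_abs_self _)

lemma isHermitian_permMatrix_mul_diagonal {m R : Type*} [Fintype m] [DecidableEq m]
    [NonAssocSemiring R] [StarRing R] {σ : Equiv.Perm m} (hσ : Function.Involutive σ) {d : m → R}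
    (hd : ∀ k, d (σ k) = star (d k)) : (σ.permMatrix R * diagonal d).IsHermitian := by
  ext j k
  rw [mul_diagonal, conjTranspose_apply, mul_diagonal, Equiv.Perm.permMatrix,
    PEquiv.toMatrix_apply, PEquiv.toMatrix_apply]
  by_cases hjk : σ j = k
  · simp [← hjk, hσ j, hd]
  · have hkj : σ k ≠ j := fun h => hjk (by rw [← h, hσ k])
    simp [hjk, hkj]

lemma norm_toEuclideanLin_diagonal_le {𝕜 m : Type*} [RCLike 𝕜] [Fintype m] [DecidableEq m]
    {d : m → 𝕜} {c : ℝ} (hd : ∀ k, ‖d k‖ ≤ c) (x : EuclideanSpace 𝕜 m) :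
    ‖toEuclideanLin (diagonal d) x‖ ≤ c * ‖x‖ := by
  open scoped Matrix.Norms.L2Operator in
  cases isEmpty_or_nonempty m
  · simp [Subsingleton.elim x 0]
  · calc _ ≤ ‖diagonal d‖ * ‖x‖ := l2_opNorm_mulVec _ x
      _ ≤ c * ‖x‖ := by
        rw [l2_opNorm_diagonal]
        gcongr
        exact (pi_norm_le_iff_of_nonempty d).mpr hd

lemma eq_adjMatrix_pathGraph_add_diagonal {R : Type*} [NonAssocSemiring R] {n : ℕ} {d : Fin n → R}
    {J : Matrix (Fin n) (Fin n) R}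
    (hJ : ∀ k m : Fin n, J k m = if (k : ℕ) + 1 = m then 1 else if (m : ℕ) + 1 = k then 1
      else if k = m then d k else 0) :
    J = (pathGraph n).adjMatrix R + diagonal d := by
  ext k m
  rw [hJ, Matrix.add_apply, adjMatrix_apply, diagonal_apply]
  simp only [pathGraph_adj]
  split_ifs <;> first | omega | simp

lemma one_div_mul_sin_sq_le_cos_sub_cos_two_mul {n : ℕ} (hn : 1 ≤ n) :
    1 / (n : ℝ) * sin (π / (2 * (n + 1))) ^ 2 ≤
      cos (π / (n + 1)) - cos (2 * (π / (n + 1))) := by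
  have hn' : (1 : ℝ) ≤ n := by exact_mod_cast hn
  have hangle : π / ((n : ℝ) + 1) ≤ π / 2 := by
    gcongr
    linarith
  have hcos : 0 ≤ cos (π / (n + 1)) :=
    cos_nonneg_of_neg_pi_div_two_le_of_le
      ((neg_nonpos.mpr pi_div_two_pos.le).trans (by positivity)) hangle
  calc 1 / (n : ℝ) * sin (π / (2 * (n + 1))) ^ 2 ≤ 2 * sin (π / (2 * (n + 1))) ^ 2 := by
        gcongr
        exact ((div_le_one (by positivity)).mpr hn').trans one_le_two
    _ = 2 * sin (π / (n + 1) / 2) ^ 2 := by rw [div_div, mul_comm ((n : ℝ) + 1)]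
    _ ≤ _ := two_mul_sin_sq_le_cos_sub_cos_two_mul hcos

theorem stmt_4_general (n : ℕ) (γ : Fin n → ℝ) (hγ : ∀ k, γ k.rev = -γ k)
    (hΓ : ∀ k, |γ k| ≤ cos (π / (n + 1)) - cos (2 * (π / (n + 1)))) :
    ∀ μ ∈ spectrum ℂ ((pathGraph n).adjMatrix ℂ +
      diagonal fun k => Complex.I * (γ k : ℂ)), μ.im = 0 := by
  intro μ hμ
  rw [← spectrum_toLpLin 2, ← End.hasEigenvalue_iff_mem_spectrum, map_add] at hμ
  refine im_eq_zero_of_hasEigenvalue_add toEuclideanLin_adjMatrix_sineBasis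
    toEuclideanLin_revPerm_sineBasis (fun j => by simp)
    (fun j k hjk => two_mul_cos_sub_cos_le_abs_pathEigenvalue_sub fun h => hjk (h ▸ rfl))
    ?_ (fun x => ?_) hμ
  · rw [← toLpLin_mul_same, isSymmetric_toEuclideanLin_iff]
    exact isHermitian_permMatrix_mul_diagonal Fin.rev_involutive (by simp [hγ])
  · rw [mul_div_cancel_left₀ _ two_ne_zero]
    exact norm_toEuclideanLin_diagonal_le (by simpa using hΓ) x

end PathGraph

/-- unbroken PT symmetry: with `Γ := max_{1 ≤ k ≤ 2N} |γ_k|`, if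
`Γ ≤ (1/(2N)) sin²(π/(2(2N+1)))`, then every eigenvalue of the matrix `J` is real. -/
theorem stmt_4 (N : ℕ) (hN : 1 ≤ N) (γ : Fin (2 * N) → ℝ)
    (hγ : ∀ k : Fin (2 * N), γ k = - γ ⟨2 * N - 1 - (k : ℕ), by have := k.isLt; omega⟩)
    (J : Matrix (Fin (2 * N)) (Fin (2 * N)) ℂ)
    (hJ : ∀ k m : Fin (2 * N), J k m =
      if (k : ℕ) + 1 = (m : ℕ) then 1
      else if (m : ℕ) + 1 = (k : ℕ) then 1
      else if k = m then Complex.I * (γ k : ℂ) else 0)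
    (hΓ : (Finset.univ.sup' (Finset.univ_nonempty_iff.mpr ⟨⟨0, by omega⟩⟩)
        fun k : Fin (2 * N) => |γ k|) ≤
      (1 / (2 * (N : ℝ))) * Real.sin (Real.pi / (2 * (2 * (N : ℝ) + 1))) ^ 2) :
    ∀ μ : ℂ, μ ∈ spectrum ℂ J → μ.im = 0 := by
  rw [eq_adjMatrix_pathGraph_add_diagonal hJ]
  refine stmt_4_general (2 * N) γ (fun k => ?_) fun k =>
    ((le_sup' (fun k => |γ k|) (mem_univ k)).trans hΓ).trans ?_
  · rw [hγ k, neg_neg]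
    exact congrArg γ (Fin.ext (by grind))
  · exact_mod_cast one_div_mul_sin_sq_le_cos_sub_cos_two_mul (n := 2 * N) (by omega)
end

section
/- If Σ_{k=1}^{2N} γ_k² > 2·(2N − 1), then J has an eigenvalue λ with Im(λ) ≠ 0; in particular, since non-real eigenvalues of J occur together with their complex conjugates, J has at least two distinct eigenvalues with nonzero imaginary part. -/
/-!
The trace of `J ^ 2` is the sum of the squares of the eigenvalues of `J`, so it would be nonnegative
if all of them were real. But `tr (J ^ 2) = tr (A ^ 2) - ∑ γ_k ^ 2` up to an imaginary number, where
`A` is the adjacency matrix of the path on `2N` vertices and `tr (A ^ 2)` is twice the number of its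
edges. Reflecting the path replaces `γ` by `-γ`, that is `J` by its entrywise conjugate, so the
characteristic polynomial of `J` has real coefficients and its roots come in conjugate pairs.
-/

section Spectrum

variable {n : Type*} [Fintype n] [DecidableEq n]

theorem re_trace_nonneg_of_spectrum_re_nonneg {A : Matrix n n ℂ}
    (h : ∀ z ∈ spectrum ℂ A, 0 ≤ z.re) : 0 ≤ A.trace.re := by
  rw [Matrix.trace_eq_sum_roots_charpoly, ← Complex.coe_reAddGroupHom, map_multiset_sum]
  refine Multiset.sum_nonneg fun x hx => ?_
  obtain ⟨z, hz, rfl⟩ := Multiset.mem_map.mp hx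
  exact h z (Matrix.mem_spectrum_of_isRoot_charpoly (Polynomial.isRoot_of_mem_roots hz))

theorem exists_mem_spectrum_im_ne_zero_of_re_trace_sq_neg {A : Matrix n n ℂ}
    (h : (A ^ 2).trace.re < 0) : ∃ z ∈ spectrum ℂ A, z.im ≠ 0 := by
  by_contra! hreal
  refine h.not_ge (re_trace_nonneg_of_spectrum_re_nonneg fun w hw => ?_)
  rw [spectrum.map_pow_of_pos A two_pos] at hw
  obtain ⟨z, hz, rfl⟩ := hw
  simpa [pow_two, hreal z hz] using mul_self_nonneg z.re

theorem mem_spectrum_submatrix_equiv_iff {m R : Type*} [Fintype m] [DecidableEq m] [CommRing R]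
    (e : m ≃ n) {A : Matrix n n R} {r : R} :
    r ∈ spectrum R (A.submatrix e e) ↔ r ∈ spectrum R A := by
  rw [← AlgEquiv.spectrum_eq (Matrix.reindexAlgEquiv R R e.symm) A]
  rfl

theorem map_mem_spectrum_matrix_map {K R : Type*} [Field K] [CommRing R] [Nontrivial R]
    (f : K →+* R) {A : Matrix n n K} {z : K} (hz : z ∈ spectrum K A) :
    f z ∈ spectrum R (A.map f) := by
  apply Matrix.mem_spectrum_of_isRoot_charpoly
  rw [Matrix.charpoly_map]
  exact (Matrix.mem_spectrum_iff_isRoot_charpoly.mp hz).map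

end Spectrum

/-- Symmetry of a Hamiltonian under parity, here an arbitrary permutation `σ` of the sites, combined
with time reversal, which acts on matrices by entrywise complex conjugation. -/
def IsPTSymmetric {n : Type*} (σ : Equiv.Perm n) (H : Matrix n n ℂ) : Prop :=
  H.submatrix σ σ = H.map (starRingEnd ℂ)

theorem IsPTSymmetric.conj_mem_spectrum {n : Type*} [Fintype n] [DecidableEq n]
    {σ : Equiv.Perm n} {H : Matrix n n ℂ} (hH : IsPTSymmetric σ H) {z : ℂ}
    (hz : z ∈ spectrum ℂ H) : (starRingEnd ℂ) z ∈ spectrum ℂ H := by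
  rw [← mem_spectrum_submatrix_equiv_iff σ, hH]
  exact map_mem_spectrum_matrix_map _ hz

section GainLoss

variable {n : Type*} [DecidableEq n]

/-- The Hamiltonian `A + i diag γ` of a system with real couplings `A` between its sites and gain or
loss of rate `γ k` at the site `k`. -/
def gainLossHamiltonian (A : Matrix n n ℝ) (γ : n → ℝ) : Matrix n n ℂ :=
  A.map Complex.ofReal + Matrix.diagonal fun k => Complex.I * γ k

theorem isPTSymmetric_gainLossHamiltonian {A : Matrix n n ℝ} {γ : n → ℝ} {σ : Equiv.Perm n}
    (hA : A.submatrix σ σ = A) (hγ : ∀ k, γ (σ k) = -γ k) :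
    IsPTSymmetric σ (gainLossHamiltonian A γ) := by
  ext k m
  have hAkm : A (σ k) (σ m) = A k m := congr_fun₂ hA k m
  obtain rfl | hkm := eq_or_ne k m
  · simp [gainLossHamiltonian, hAkm, hγ]
  · simp [gainLossHamiltonian, hAkm, hkm]

theorem re_trace_gainLossHamiltonian_sq [Fintype n] (A : Matrix n n ℝ) (γ : n → ℝ) :
    (gainLossHamiltonian A γ ^ 2).trace.re = (A ^ 2).trace - ∑ k, γ k ^ 2 := by
  have hentry (k m : n) :
      (gainLossHamiltonian A γ k m * gainLossHamiltonian A γ m k).re =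
        A k m * A m k - if k = m then γ k ^ 2 else 0 := by
    obtain rfl | hkm := eq_or_ne k m
    · simp [gainLossHamiltonian, pow_two]
    · simp [gainLossHamiltonian, hkm, hkm.symm]
  simp [Matrix.trace, pow_two (gainLossHamiltonian A γ), pow_two A, Matrix.mul_apply, hentry]

end GainLoss

section PathGraph

theorem trace_adjMatrix_sq {V : Type*} [Fintype V] [DecidableEq V] (R : Type*) [Semiring R]
    (G : SimpleGraph V) [DecidableRel G.Adj] :
    (G.adjMatrix R ^ 2).trace = 2 * G.edgeFinset.card := by
  simp only [Matrix.trace, Matrix.diag, pow_two, G.adjMatrix_mul_self_apply_self]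
  exact_mod_cast congrArg (Nat.cast (R := R)) G.sum_degrees_eq_twice_card_edges

theorem card_edgeFinset_pathGraph (n : ℕ) [Fintype (SimpleGraph.pathGraph n).edgeSet] :
    (SimpleGraph.pathGraph n).edgeFinset.card = n - 1 := by
  cases n with
  | zero => simp [Subsingleton.elim (SimpleGraph.pathGraph 0) ⊥]
  | succ n =>
    have hmem {k m : Fin (n + 1)} (h : (k : ℕ) + 1 = m) :
        ∃ i : Fin n, s(i.castSucc, i.succ) = s(k, m) :=
      ⟨⟨k, by omega⟩, congrArg (fun j => s(k, j)) (Fin.ext h)⟩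
    have hcard : (Finset.univ : Finset (Fin n)).card =
        (SimpleGraph.pathGraph (n + 1)).edgeFinset.card := by
      refine Finset.card_bij (fun i _ => s(i.castSucc, i.succ)) ?_ ?_ ?_
      · simp [SimpleGraph.pathGraph_adj]
      · intro i _ j _ hij
        simp only [Sym2.eq_iff, Fin.ext_iff, Fin.val_castSucc, Fin.val_succ] at hij
        omega
      · intro e he
        induction e using Sym2.ind with | h k m => ?_
        rw [SimpleGraph.mem_edgeFinset, SimpleGraph.mem_edgeSet, SimpleGraph.pathGraph_adj] at he
        obtain hkm | hmk := he
        · simpa using hmem hkm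
        · simpa [Sym2.eq_swap] using hmem hmk
    simpa using hcard.symm

theorem adjMatrix_pathGraph_submatrix_revPerm (R : Type*) [Zero R] [One R] (n : ℕ)
    [DecidableRel (SimpleGraph.pathGraph n).Adj] :
    ((SimpleGraph.pathGraph n).adjMatrix R).submatrix Fin.revPerm Fin.revPerm =
      (SimpleGraph.pathGraph n).adjMatrix R := by
  ext k m
  have hadj : (SimpleGraph.pathGraph n).Adj k.rev m.rev ↔ (SimpleGraph.pathGraph n).Adj k m := by
    simp only [SimpleGraph.pathGraph_adj, Fin.val_rev]
    omega
  simp [SimpleGraph.adjMatrix_apply, hadj]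

theorem gainLossHamiltonian_pathGraph_apply {n : ℕ} [DecidableRel (SimpleGraph.pathGraph n).Adj]
    (γ : Fin n → ℝ) (k m : Fin n) :
    gainLossHamiltonian ((SimpleGraph.pathGraph n).adjMatrix ℝ) γ k m =
      if (k : ℕ) + 1 = m then 1 else if (m : ℕ) + 1 = k then 1
      else if k = m then Complex.I * γ k else 0 := by
  obtain rfl | hkm := eq_or_ne k m
  · simp [gainLossHamiltonian]
  · simp [gainLossHamiltonian, SimpleGraph.adjMatrix_apply, SimpleGraph.pathGraph_adj, hkm,
      ite_or, apply_ite Complex.ofReal]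

end PathGraph

theorem stmt_5_general {n : Type*} [Fintype n] [DecidableEq n] (A : Matrix n n ℝ) (γ : n → ℝ)
    (σ : Equiv.Perm n) (hA : A.submatrix σ σ = A) (hγ : ∀ k, γ (σ k) = -γ k)
    (hsum : (A ^ 2).trace < ∑ k, γ k ^ 2) :
    (∃ z ∈ spectrum ℂ (gainLossHamiltonian A γ),
      z.im ≠ 0 ∧ (starRingEnd ℂ) z ∈ spectrum ℂ (gainLossHamiltonian A γ)) ∧
    (∃ z₁ z₂ : ℂ, z₁ ≠ z₂ ∧ z₁ ∈ spectrum ℂ (gainLossHamiltonian A γ) ∧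
      z₂ ∈ spectrum ℂ (gainLossHamiltonian A γ) ∧ z₁.im ≠ 0 ∧ z₂.im ≠ 0) := by
  have htrace : (gainLossHamiltonian A γ ^ 2).trace.re < 0 := by
    rw [re_trace_gainLossHamiltonian_sq]
    linarith
  obtain ⟨z, hz, him⟩ := exists_mem_spectrum_im_ne_zero_of_re_trace_sq_neg htrace
  have hconj := (isPTSymmetric_gainLossHamiltonian hA hγ).conj_mem_spectrum hz
  have hne : z ≠ (starRingEnd ℂ) z := fun h => him (Complex.conj_eq_iff_im.mp h.symm)
  exact ⟨⟨z, hz, him, hconj⟩, z, (starRingEnd ℂ) z, hne, hz, hconj, him, by simpa using him⟩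

/-- broken PT symmetry, part 1: if `Σ_{k=1}^{2N} γ_k² > 2(2N − 1)`, then `J` has
an eigenvalue with nonzero imaginary part; in particular, since non-real eigenvalues of `J`
occur together with their complex conjugates, `J` has at least two distinct eigenvalues with
nonzero imaginary part. -/
theorem stmt_5 (N : ℕ) (hN : 1 ≤ N) (γ : Fin (2 * N) → ℝ)
    (hγ : ∀ k : Fin (2 * N), γ k = - γ ⟨2 * N - 1 - (k : ℕ), by have := k.isLt; omega⟩)
    (J : Matrix (Fin (2 * N)) (Fin (2 * N)) ℂ)
    (hJ : ∀ k m : Fin (2 * N), J k m =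
      if (k : ℕ) + 1 = (m : ℕ) then 1
      else if (m : ℕ) + 1 = (k : ℕ) then 1
      else if k = m then Complex.I * (γ k : ℂ) else 0)
    (hsum : (∑ k : Fin (2 * N), (γ k) ^ 2) > 2 * (2 * (N : ℝ) - 1)) :
    (∃ lam : ℂ, lam ∈ spectrum ℂ J ∧ lam.im ≠ 0 ∧ (starRingEnd ℂ) lam ∈ spectrum ℂ J) ∧
    (∃ lam₁ lam₂ : ℂ, lam₁ ≠ lam₂ ∧ lam₁ ∈ spectrum ℂ J ∧ lam₂ ∈ spectrum ℂ J ∧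
      lam₁.im ≠ 0 ∧ lam₂.im ≠ 0) := by
  classical
  obtain rfl : J = gainLossHamiltonian ((SimpleGraph.pathGraph (2 * N)).adjMatrix ℝ) γ := by
    ext k m
    rw [hJ, gainLossHamiltonian_pathGraph_apply]
  have hrev (k : Fin (2 * N)) : γ k.rev = -γ k := by
    rw [hγ k, neg_neg]
    congr 1
    ext
    simp only [Fin.val_rev]
    omega
  have htrace : ((SimpleGraph.pathGraph (2 * N)).adjMatrix ℝ ^ 2).trace < ∑ k, γ k ^ 2 := by
    rw [trace_adjMatrix_sq, card_edgeFinset_pathGraph, Nat.cast_pred (by omega)]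
    exact_mod_cast hsum
  exact stmt_5_general _ γ Fin.revPerm (adjMatrix_pathGraph_submatrix_revPerm ℝ _) hrev htrace
end
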